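/- Under the inductive Gevrey bounds on h, there is a constant c₂ ≥ 1 depending only on s and on finitely many low-order Hölder norms of h, but not on m, n, L₁, L₂, such that for α = (α₁,α₂) = (m−n, n): 2‖∂^α(h_p h_q h_{qp})‖₀ + ‖∂^α(h_p² h_{qq})‖₀ ≤ c₂ L₁^{α₁} L₂^{α₂−1} [(|α|−2)!]^s. -/

import Mathlib

open Set

noncomputable section

/-- The closed strip `R̄ = ℝ × [p₀, 0]`. -/
def Strip (p₀ : ℝ) : Set (ℝ × ℝ) := {z : ℝ × ℝ | p₀ ≤ z.2 ∧ z.2 ≤ 0}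

/-- The mixed partial derivative `∂_q^a ∂_p^b f` of `f : ℝ² → ℝ` within the set `S`,
realized as the iterated Fréchet derivative within `S` applied to the corresponding
coordinate directions. -/
def mpw (S : Set (ℝ × ℝ)) (a b : ℕ) (f : ℝ × ℝ → ℝ) (z : ℝ × ℝ) : ℝ :=
  iteratedFDerivWithin ℝ (a + b) f S z
    (fun i => if (i : ℕ) < a then ((1 : ℝ), (0 : ℝ)) else ((0 : ℝ), (1 : ℝ)))

/-- `∂_q^a ∂_p^b f` within the strip `R̄`. -/
def pd (p₀ : ℝ) (a b : ℕ) (f : ℝ × ℝ → ℝ) : ℝ × ℝ → ℝ := mpw (Strip p₀) a b f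

/-- Euclidean distance on `ℝ²`. -/
def edist2 (z z' : ℝ × ℝ) : ℝ := Real.sqrt ((z.1 - z'.1) ^ 2 + (z.2 - z'.2) ^ 2)

/-- `sup_{R̄} |f|`. -/
def supS (p₀ : ℝ) (f : ℝ × ℝ → ℝ) : ℝ := sSup ((fun z => |f z|) '' Strip p₀)

/-- The Hölder seminorm of exponent `μ` of `f` over the strip `R̄`. -/
def hsemi (p₀ μ : ℝ) (f : ℝ × ℝ → ℝ) : ℝ :=
  sSup {y | ∃ z ∈ Strip p₀, ∃ z' ∈ Strip p₀, z ≠ z' ∧ y = |f z - f z'| / (edist2 z z') ^ μ}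

/-- The `C^k` sup-norm `‖f‖_k = Σ_{|α| ≤ k} sup_{R̄} |∂^α f|`. -/
def cknorm (p₀ : ℝ) (k : ℕ) (f : ℝ × ℝ → ℝ) : ℝ :=
  ∑ a ∈ Finset.range (k + 1), ∑ b ∈ Finset.range (k + 1 - a), supS p₀ (pd p₀ a b f)

/-- The Hölder norm `‖f‖_{k,μ} = ‖f‖_k + max_{|α| = k} [∂^α f]_μ`. -/
def hnorm (p₀ μ : ℝ) (k : ℕ) (f : ℝ × ℝ → ℝ) : ℝ :=
  cknorm p₀ k f + sSup {y | ∃ a b : ℕ, a + b = k ∧ y = hsemi p₀ μ (pd p₀ a b f)}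

/-- Boundedness of `f` on the strip (finiteness of `sup_{R̄} |f|`). -/
def bddS (p₀ : ℝ) (f : ℝ × ℝ → ℝ) : Prop := BddAbove ((fun z => |f z|) '' Strip p₀)

/-- Finiteness of the Hölder seminorm of `f` on the strip. -/
def bddH (p₀ μ : ℝ) (f : ℝ × ℝ → ℝ) : Prop :=
  BddAbove {y | ∃ z ∈ Strip p₀, ∃ z' ∈ Strip p₀, z ≠ z' ∧ y = |f z - f z'| / (edist2 z z') ^ μ}

/-- Finiteness of the `C^{k,μ}(R̄)` norm. -/
def finCk (p₀ μ : ℝ) (k : ℕ) (f : ℝ × ℝ → ℝ) : Prop :=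
  (∀ a b : ℕ, a + b ≤ k → bddS p₀ (pd p₀ a b f)) ∧
  (∀ a b : ℕ, a + b = k → bddH p₀ μ (pd p₀ a b f))

/-- Membership in `C^{k,μ}(R̄)`: `k` times continuously differentiable on the strip with
bounded derivatives, the top-order ones Hölder continuous of exponent `μ`. -/
def MemCk (p₀ μ : ℝ) (k : ℕ) (f : ℝ × ℝ → ℝ) : Prop :=
  ContDiffOn ℝ k f (Strip p₀) ∧ finCk p₀ μ k f

/-- The inductive Gevrey bounds on `h`:
(i) `‖∂^γ h‖₂ ≤ L₁^{γ₁−1} L₂^{γ₂} [(|γ|−2)!]^s` for `2 ≤ |γ| ≤ m−1`;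
(ii) `‖∂_q^{m−i}∂_p^i h‖₂ ≤ L₁^{m−i−1} L₂^i [(m−2)!]^s` for `0 ≤ i ≤ n−1`. -/
def IndBounds (p₀ s L₁ L₂ : ℝ) (m n : ℕ) (h : ℝ × ℝ → ℝ) : Prop :=
  (∀ g1 g2 : ℕ, 2 ≤ g1 + g2 → g1 + g2 ≤ m - 1 →
    cknorm p₀ 2 (pd p₀ g1 g2 h) ≤
      L₁ ^ ((g1 : ℤ) - 1) * L₂ ^ g2 * (Nat.factorial (g1 + g2 - 2) : ℝ) ^ s) ∧
  (∀ i : ℕ, i < n →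
    cknorm p₀ 2 (pd p₀ (m - i) i h) ≤
      L₁ ^ ((m : ℤ) - (i : ℤ) - 1) * L₂ ^ i * (Nat.factorial (m - 2) : ℝ) ^ s)

/-!
Let `M` bound the `C⁴` norm of `h` from above, with `M ≥ 1`. Each of `h_q`, `h_p`, `h_qp`, `h_qq`
is a derivative of `h` of order at most two with at most one derivative in `p`. The inductive
bounds control two further derivatives at no cost, so that one `p`-derivative can always be moved
into the `C²` norm: for `a ≤ m - n` and `b ≤ n` the derivative `∂^(a,b)` of each factor is at most
`M` times the weight `W(a, b) = L₁ ^ a * L₂ ^ (b - 1) * ((a + b - 2)!) ^ s`.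

Such bounds are stable under products. In the Leibniz formula the powers of `L₁` and `L₂` factor
out, and Vandermonde's identity collapses the double sum to
`∑ i + j = N, N.choose i * ((i - 2)! * (j - 2)!) ^ s`. This is at most `200 * ((N - 2)!) ^ s`,
because `(i - 2)!` is comparable to `i! / (i + 1) ^ 2` and `∑ 1 / (i + 1) ^ 2` converges.
-/

open scoped ContDiff Nat

section DirectionalDerivative

variable {E F : Type*} [NormedAddCommGroup E] [NormedSpace ℝ E]
  [NormedAddCommGroup F] [NormedSpace ℝ F] {S : Set E} {v : E}

/-- The derivative of `f` within `S` in the direction `v`, as a value of the Fréchet derivative;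
partial derivatives on the strip are iterates of it. -/
def dirDerivWithin (S : Set E) (v : E) (f : E → F) (z : E) : F :=
  fderivWithin ℝ f S z v

lemma contDiffOn_dirDerivWithin (hS : UniqueDiffOn ℝ S) {f : E → F} (hf : ContDiffOn ℝ ∞ f S) :
    ContDiffOn ℝ ∞ (dirDerivWithin S v f) S :=
  (hf.fderivWithin hS (by simp)).clm_apply contDiffOn_const

lemma dirDerivWithin_congr {f g : E → F} (h : EqOn f g S) :
    EqOn (dirDerivWithin S v f) (dirDerivWithin S v g) S := fun z hz => by
  simp only [dirDerivWithin, fderivWithin_congr h (h hz)]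

lemma dirDerivWithin_mul (hS : UniqueDiffOn ℝ S) {𝔸 : Type*} [NormedRing 𝔸] [NormedAlgebra ℝ 𝔸]
    {f g : E → 𝔸} (hf : DifferentiableOn ℝ f S) (hg : DifferentiableOn ℝ g S) :
    EqOn (dirDerivWithin S v fun z => f z * g z)
      (fun z => dirDerivWithin S v f z * g z + f z * dirDerivWithin S v g z) S := fun z hz => by
  simp [dirDerivWithin, fderivWithin_fun_mul' (hS z hz) (hf z hz) (hg z hz), add_comm]

lemma dirDerivWithin_sum_const_mul (hS : UniqueDiffOn ℝ S) {𝔸 : Type*} [NormedRing 𝔸]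
    [NormedAlgebra ℝ 𝔸] {ι : Type*} (t : Finset ι) (c : ι → 𝔸) {f : ι → E → 𝔸}
    (hf : ∀ i ∈ t, DifferentiableOn ℝ (f i) S) :
    EqOn (dirDerivWithin S v fun z => ∑ i ∈ t, c i * f i z)
      (fun z => ∑ i ∈ t, c i * dirDerivWithin S v (f i) z) S := fun z hz => by
  unfold dirDerivWithin
  rw [fderivWithin_fun_sum (hS z hz) fun i hi => (hf i hi z hz).const_mul (c i), sum_apply]
  refine Finset.sum_congr rfl fun i hi => ?_
  rw [fderivWithin_const_mul (hS z hz) (hf i hi z hz)]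
  simp

lemma dirDerivWithin_comm (hS : UniqueDiffOn ℝ S) (hS' : S ⊆ closure (interior S)) {f : E → F}
    (hf : ContDiffOn ℝ ∞ f S) (v w : E) :
    EqOn (dirDerivWithin S v (dirDerivWithin S w f))
      (dirDerivWithin S w (dirDerivWithin S v f)) S := fun z hz => by
  have second_deriv (v w : E) : dirDerivWithin S v (dirDerivWithin S w f) z =
      fderivWithin ℝ (fderivWithin ℝ f S) S z v w := by
    have hf' : DifferentiableOn ℝ (fderivWithin ℝ f S) S :=
      (hf.fderivWithin hS (m := ∞) (by simp)).differentiableOn (by simp)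
    unfold dirDerivWithin
    rw [fderivWithin_clm_apply (hS z hz) (hf' z hz) (differentiableWithinAt_const w)]
    simp
  rw [second_deriv, second_deriv]
  have two_le : minSmoothness ℝ 2 ≤ ∞ := by
    rw [minSmoothness_of_isRCLikeNormedField]
    exact WithTop.coe_le_coe.2 le_top
  exact (hf z hz).isSymmSndFDerivWithinAt two_le hS (hS' hz) hz v w

lemma iteratedFDerivWithin_succ_eq_dirDerivWithin (hS : UniqueDiffOn ℝ S) {f : E → F}
    (hf : ContDiffOn ℝ ∞ f S) (n : ℕ) (w : Fin (n + 1) → E) :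
    EqOn (fun z => iteratedFDerivWithin ℝ (n + 1) f S z w)
      (dirDerivWithin S (w 0) fun z => iteratedFDerivWithin ℝ n f S z (Fin.tail w)) S :=
  fun z hz => by
  have hdiff : DifferentiableOn ℝ (iteratedFDerivWithin ℝ n f S) S :=
    hf.differentiableOn_iteratedFDerivWithin (mod_cast WithTop.coe_lt_top n) hS
  simp only [dirDerivWithin, iteratedFDerivWithin_succ_apply_left,
    fderivWithin_continuousMultilinear_apply_const_apply (hS z hz) (hdiff z hz)]

end DirectionalDerivative

section BinomialSums

open Finset

variable {R : Type*} [NonAssocSemiring R]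

lemma sum_antidiagonal_choose_succ_mul_eq_sum_add (f : ℕ → ℕ → R) (n : ℕ) :
    ∑ ij ∈ antidiagonal (n + 1), ((n + 1).choose ij.1 : R) * f ij.1 ij.2 =
      ∑ ij ∈ antidiagonal n, (n.choose ij.1 : R) * (f (ij.1 + 1) ij.2 + f ij.1 (ij.2 + 1)) := by
  rw [sum_antidiagonal_choose_succ_mul, ← sum_add_distrib]
  refine sum_congr rfl fun ij hij => ?_
  rw [← Nat.choose_symm_of_eq_add (mem_antidiagonal.1 hij).symm, ← mul_add, add_comm]

lemma sum_antidiagonal_choose_mul_sum_antidiagonal_choose_mul (f : ℕ → ℕ → R) (a b : ℕ) :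
    ∑ ij ∈ antidiagonal a, (a.choose ij.1 : R) *
        ∑ kl ∈ antidiagonal b, (b.choose kl.1 : R) * f (ij.1 + kl.1) (ij.2 + kl.2) =
      ∑ ij ∈ antidiagonal (a + b), ((a + b).choose ij.1 : R) * f ij.1 ij.2 := by
  induction a generalizing f with
  | zero => simp
  | succ a ih =>
    rw [sum_antidiagonal_choose_succ_mul_eq_sum_add fun i j =>
        ∑ kl ∈ antidiagonal b, (b.choose kl.1 : R) * f (i + kl.1) (j + kl.2),
      add_right_comm, sum_antidiagonal_choose_succ_mul_eq_sum_add,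
      ← ih fun i j => f (i + 1) j + f i (j + 1)]
    simp only [← sum_add_distrib, ← mul_add, add_right_comm _ 1]

end BinomialSums

section MixedPartial

open Finset

variable {S : Set (ℝ × ℝ)} {f g : ℝ × ℝ → ℝ}

lemma mpw_zero_zero : mpw S 0 0 f = f := by
  funext z
  simp [mpw]

lemma mpw_eq_of_add_eq {a b N : ℕ} (h : a + b = N) :
    mpw S a b f = fun z => iteratedFDerivWithin ℝ N f S z
      fun i => if (i : ℕ) < a then ((1 : ℝ), (0 : ℝ)) else ((0 : ℝ), (1 : ℝ)) := by
  subst h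
  rfl

lemma mpw_succ_left (hS : UniqueDiffOn ℝ S) (hf : ContDiffOn ℝ ∞ f S) (a b : ℕ) :
    EqOn (mpw S (a + 1) b f) (dirDerivWithin S (1, 0) (mpw S a b f)) S := by
  rw [mpw_eq_of_add_eq (add_right_comm a 1 b), mpw_eq_of_add_eq rfl]
  simpa [Fin.tail_def] using iteratedFDerivWithin_succ_eq_dirDerivWithin hS hf (a + b)
    fun i => if (i : ℕ) < a + 1 then (1, 0) else (0, 1)

lemma mpw_zero_succ (hS : UniqueDiffOn ℝ S) (hf : ContDiffOn ℝ ∞ f S) (b : ℕ) :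
    EqOn (mpw S 0 (b + 1) f) (dirDerivWithin S (0, 1) (mpw S 0 b f)) S := by
  rw [mpw_eq_of_add_eq (zero_add (b + 1)), mpw_eq_of_add_eq (zero_add b)]
  simpa [Fin.tail_def] using iteratedFDerivWithin_succ_eq_dirDerivWithin hS hf b fun _ => (0, 1)

lemma contDiffOn_mpw (hS : UniqueDiffOn ℝ S) (hf : ContDiffOn ℝ ∞ f S) (a b : ℕ) :
    ContDiffOn ℝ ∞ (mpw S a b f) S := by
  induction a with
  | zero =>
    induction b with
    | zero => rwa [mpw_zero_zero]
    | succ b ih => exact (contDiffOn_dirDerivWithin hS ih).congr (mpw_zero_succ hS hf b)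
  | succ a ih => exact (contDiffOn_dirDerivWithin hS ih).congr (mpw_succ_left hS hf a b)

lemma mpw_succ_right (hS : UniqueDiffOn ℝ S) (hS' : S ⊆ closure (interior S))
    (hf : ContDiffOn ℝ ∞ f S) (a b : ℕ) :
    EqOn (mpw S a (b + 1) f) (dirDerivWithin S (0, 1) (mpw S a b f)) S := by
  induction a with
  | zero => exact mpw_zero_succ hS hf b
  | succ a ih =>
    have hq_p := (mpw_succ_left hS hf a (b + 1)).trans (dirDerivWithin_congr ih)
    have hp_q := dirDerivWithin_congr (v := (0, 1)) (mpw_succ_left hS hf a b)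
    exact hq_p.trans <| (dirDerivWithin_comm hS hS' (contDiffOn_mpw hS hf a b) _ _).trans hp_q.symm

lemma mpw_mpw (hS : UniqueDiffOn ℝ S) (hS' : S ⊆ closure (interior S))
    (hf : ContDiffOn ℝ ∞ f S) (a b c d : ℕ) :
    EqOn (mpw S a b (mpw S c d f)) (mpw S (a + c) (b + d) f) S := by
  have hcd := contDiffOn_mpw hS hf c d
  induction a with
  | zero =>
    induction b with
    | zero => simp [mpw_zero_zero, EqOn]
    | succ b ih =>
      rw [add_right_comm b 1 d]
      exact (mpw_succ_right hS hS' hcd 0 b).trans <|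
        (dirDerivWithin_congr ih).trans (mpw_succ_right hS hS' hf _ _).symm
  | succ a ih =>
    rw [add_right_comm a 1 c]
    exact (mpw_succ_left hS hcd a b).trans <|
      (dirDerivWithin_congr ih).trans (mpw_succ_left hS hf _ _).symm

lemma dirDerivWithin_sum_antidiagonal_choose_mul {E : Type*} [NormedAddCommGroup E]
    [NormedSpace ℝ E] {S : Set E} (hS : UniqueDiffOn ℝ S) {v : E} {F : ℕ → ℕ → E → ℝ}
    (hF : ∀ i j, DifferentiableOn ℝ (F i j) S)
    (hv : ∀ i j, EqOn (dirDerivWithin S v (F i j)) (F (i + 1) j + F i (j + 1)) S) (n : ℕ) :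
    EqOn (dirDerivWithin S v fun z =>
        ∑ ij ∈ antidiagonal n, (n.choose ij.1 : ℝ) * F ij.1 ij.2 z)
      (fun z => ∑ ij ∈ antidiagonal (n + 1), ((n + 1).choose ij.1 : ℝ) * F ij.1 ij.2 z) S :=
  fun z hz => by
  simp only [dirDerivWithin_sum_const_mul hS _ _ (fun (ij : ℕ × ℕ) _ => hF ij.1 ij.2) hz,
    hv _ _ hz, sum_antidiagonal_choose_succ_mul_eq_sum_add (fun i j => F i j z), Pi.add_apply]

lemma mpw_zero_mul (hS : UniqueDiffOn ℝ S) (hf : ContDiffOn ℝ ∞ f S) (hg : ContDiffOn ℝ ∞ g S)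
    (b : ℕ) :
    EqOn (mpw S 0 b fun z => f z * g z)
      (fun z => ∑ kl ∈ antidiagonal b,
        (b.choose kl.1 : ℝ) * (mpw S 0 kl.1 f z * mpw S 0 kl.2 g z)) S := by
  have hdf (k : ℕ) := (contDiffOn_mpw hS hf 0 k).differentiableOn (by simp)
  have hdg (l : ℕ) := (contDiffOn_mpw hS hg 0 l).differentiableOn (by simp)
  have product_rule (k l : ℕ) : EqOn
      (dirDerivWithin S (0, 1) fun z => mpw S 0 k f z * mpw S 0 l g z)
      ((fun z => mpw S 0 (k + 1) f z * mpw S 0 l g z) +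
        fun z => mpw S 0 k f z * mpw S 0 (l + 1) g z) S := fun z hz => by
    simp only [dirDerivWithin_mul hS (hdf k) (hdg l) hz, Pi.add_apply,
      mpw_zero_succ hS hf k hz, mpw_zero_succ hS hg l hz]
  induction b with
  | zero => intro z _; simp [mpw_zero_zero]
  | succ b ih =>
    exact (mpw_zero_succ hS (hf.mul hg) b).trans <| (dirDerivWithin_congr ih).trans <|
      dirDerivWithin_sum_antidiagonal_choose_mul hS (fun k l => (hdf k).mul (hdg l))
        product_rule b

lemma mpw_mul (hS : UniqueDiffOn ℝ S) (hf : ContDiffOn ℝ ∞ f S) (hg : ContDiffOn ℝ ∞ g S)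
    (a b : ℕ) :
    EqOn (mpw S a b fun z => f z * g z)
      (fun z => ∑ ij ∈ antidiagonal a, (a.choose ij.1 : ℝ) *
        ∑ kl ∈ antidiagonal b,
          (b.choose kl.1 : ℝ) * (mpw S ij.1 kl.1 f z * mpw S ij.2 kl.2 g z)) S := by
  have hdf (i k : ℕ) := (contDiffOn_mpw hS hf i k).differentiableOn (by simp)
  have hdg (j l : ℕ) := (contDiffOn_mpw hS hg j l).differentiableOn (by simp)
  let F (i j : ℕ) (z : ℝ × ℝ) : ℝ :=
    ∑ kl ∈ antidiagonal b, (b.choose kl.1 : ℝ) * (mpw S i kl.1 f z * mpw S j kl.2 g z)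
  have hF (i j : ℕ) : DifferentiableOn ℝ (F i j) S :=
    DifferentiableOn.fun_sum fun kl _ => ((hdf i kl.1).mul (hdg j kl.2)).const_mul _
  have product_rule (i j : ℕ) :
      EqOn (dirDerivWithin S (1, 0) (F i j)) (F (i + 1) j + F i (j + 1)) S := fun z hz => by
    simp only [F, Pi.add_apply, ← sum_add_distrib, ← mul_add,
      dirDerivWithin_sum_const_mul hS _ _
        (fun (kl : ℕ × ℕ) _ => (hdf i kl.1).fun_mul (hdg j kl.2)) hz,
      dirDerivWithin_mul hS (hdf _ _) (hdg _ _) hz,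
      mpw_succ_left hS hf _ _ hz, mpw_succ_left hS hg _ _ hz]
  induction a with
  | zero => simpa using mpw_zero_mul hS hf hg b
  | succ a ih =>
    exact (mpw_succ_left hS (hf.mul hg) a b).trans <| (dirDerivWithin_congr ih).trans <|
      dirDerivWithin_sum_antidiagonal_choose_mul hS hF product_rule a

end MixedPartial

section FactorialSums

open Finset

lemma factorial_sub_two_mul_factorial_sub_two_le (i j : ℕ) :
    (i - 2)! * (j - 2)! ≤ (i + j - 2)! :=
  (Nat.le_of_dvd (Nat.factorial_pos _) (Nat.factorial_mul_factorial_dvd_factorial_add _ _)).trans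
    (Nat.factorial_le (by lia))

lemma factorial_sub_two_mul_sq_le (n : ℕ) : (n - 2)! * (n + 1) ^ 2 ≤ 5 * n ! := by
  match n with
  | 0 | 1 => decide
  | k + 2 =>
    have : (k + 3) ^ 2 ≤ 5 * ((k + 2) * (k + 1)) := by nlinarith
    calc k ! * (k + 3) ^ 2 ≤ k ! * (5 * ((k + 2) * (k + 1))) := by gcongr
      _ = 5 * (k + 2)! := by simp only [Nat.factorial_succ]; ring

lemma factorial_le_factorial_sub_two_mul_sq (n : ℕ) : n ! ≤ (n - 2)! * (n + 1) ^ 2 := by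
  match n with
  | 0 | 1 => decide
  | k + 2 =>
    have : (k + 2) * (k + 1) ≤ (k + 3) ^ 2 := by nlinarith
    calc (k + 2)! = k ! * ((k + 2) * (k + 1)) := by simp only [Nat.factorial_succ]; ring
      _ ≤ k ! * (k + 3) ^ 2 := by gcongr

lemma choose_mul_factorial_sub_two_mul_sq_le (i j : ℕ) :
    (i + j).choose i * ((i - 2)! * (j - 2)!) * ((i + 1) ^ 2 * (j + 1) ^ 2) ≤
      50 * (i + j - 2)! * ((i + 1) ^ 2 + (j + 1) ^ 2) := by
  have hsq : (i + j + 1) ^ 2 ≤ 2 * ((i + 1) ^ 2 + (j + 1) ^ 2) :=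
    (Nat.pow_le_pow_left (by lia) 2).trans add_sq_le
  calc (i + j).choose i * ((i - 2)! * (j - 2)!) * ((i + 1) ^ 2 * (j + 1) ^ 2)
      = (i + j).choose i * (((i - 2)! * (i + 1) ^ 2) * ((j - 2)! * (j + 1) ^ 2)) := by ring
    _ ≤ (i + j).choose i * ((5 * i !) * (5 * j !)) := by
        exact Nat.mul_le_mul_left _ <|
          Nat.mul_le_mul (factorial_sub_two_mul_sq_le i) (factorial_sub_two_mul_sq_le j)
    _ = 25 * (i + j)! := by
        rw [← Nat.add_choose_mul_factorial_mul_factorial, Nat.choose_symm_add]; ring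
    _ ≤ 25 * ((i + j - 2)! * (2 * ((i + 1) ^ 2 + (j + 1) ^ 2))) := by
        gcongr
        exact (factorial_le_factorial_sub_two_mul_sq _).trans (Nat.mul_le_mul_left _ hsq)
    _ = 50 * (i + j - 2)! * ((i + 1) ^ 2 + (j + 1) ^ 2) := by ring

lemma choose_mul_factorial_sub_two_le (i j : ℕ) :
    ((i + j).choose i : ℝ) * ((i - 2)! * (j - 2)!) ≤
      50 * (i + j - 2)! * ((((i + 1 : ℕ) : ℝ) ^ 2)⁻¹ + (((j + 1 : ℕ) : ℝ) ^ 2)⁻¹) := by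
  have h : ((i + j).choose i : ℝ) * ((i - 2)! * (j - 2)!) *
      (((i + 1 : ℕ) : ℝ) ^ 2 * ((j + 1 : ℕ) : ℝ) ^ 2) ≤
      50 * (i + j - 2)! * (((i + 1 : ℕ) : ℝ) ^ 2 + ((j + 1 : ℕ) : ℝ) ^ 2) :=
    mod_cast choose_mul_factorial_sub_two_mul_sq_le i j
  rw [inv_add_inv (by positivity) (by positivity), ← mul_div_assoc, le_div_iff₀ (by positivity)]
  exact h

lemma rpow_le_rpow_sub_one_mul {x y s : ℝ} (hx : 0 < x) (hxy : x ≤ y) (hs : 1 ≤ s) :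
    x ^ s ≤ y ^ (s - 1) * x := by
  calc x ^ s = x ^ (s - 1) * x := by rw [← Real.rpow_add_one hx.ne', sub_add_cancel]
    _ ≤ y ^ (s - 1) * x := by
      gcongr

lemma choose_mul_factorial_sub_two_rpow_le {s : ℝ} (hs : 1 ≤ s) (i j : ℕ) :
    ((i + j).choose i : ℝ) * (((i - 2)! : ℝ) ^ s * ((j - 2)! : ℝ) ^ s) ≤
      50 * ((i + j - 2)! : ℝ) ^ s *
        ((((i + 1 : ℕ) : ℝ) ^ 2)⁻¹ + (((j + 1 : ℕ) : ℝ) ^ 2)⁻¹) := by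
  have hPQ : ((i - 2)! : ℝ) * ((j - 2)! : ℝ) ≤ (i + j - 2)! :=
    mod_cast factorial_sub_two_mul_factorial_sub_two_le i j
  set P : ℝ := ((i - 2)! : ℝ) * ((j - 2)! : ℝ)
  set Q : ℝ := (↑(i + j - 2)! : ℝ)
  set T : ℝ := (((i + 1 : ℕ) : ℝ) ^ 2)⁻¹ + (((j + 1 : ℕ) : ℝ) ^ 2)⁻¹
  have hQ : 0 < Q := by positivity
  calc ((i + j).choose i : ℝ) * (((i - 2)! : ℝ) ^ s * ((j - 2)! : ℝ) ^ s)
      = (i + j).choose i * P ^ s := by rw [← Real.mul_rpow (by positivity) (by positivity)]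
    _ ≤ (i + j).choose i * (Q ^ (s - 1) * P) := by
        gcongr
        exact rpow_le_rpow_sub_one_mul (by positivity) hPQ hs
    _ = Q ^ (s - 1) * ((i + j).choose i * P) := by ring
    _ ≤ Q ^ (s - 1) * (50 * Q * T) :=
        mul_le_mul_of_nonneg_left (choose_mul_factorial_sub_two_le i j) (by positivity)
    _ = 50 * (Q ^ (s - 1) * Q) * T := by ring
    _ = 50 * Q ^ s * T := by rw [← Real.rpow_add_one hQ.ne', sub_add_cancel]

lemma sum_range_inv_succ_sq_le_two (n : ℕ) :
    ∑ i ∈ range n, (((i + 1 : ℕ) : ℝ) ^ 2)⁻¹ ≤ 2 := by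
  rw [range_eq_Ico, sum_Ico_add' (fun i : ℕ => ((i : ℝ) ^ 2)⁻¹),
    Finset.Ico_add_one_left_eq_Ioo]
  simpa using sum_Ioo_inv_sq_le (α := ℝ) 0 (n + 1)

lemma sum_antidiagonal_choose_mul_factorial_sub_two_rpow_le {s : ℝ} (hs : 1 ≤ s) (n : ℕ) :
    ∑ ij ∈ antidiagonal n,
        (n.choose ij.1 : ℝ) * (((ij.1 - 2)! : ℝ) ^ s * ((ij.2 - 2)! : ℝ) ^ s) ≤
      200 * ((n - 2)! : ℝ) ^ s := by
  have sum_fst : ∑ ij ∈ antidiagonal n, (((ij.1 + 1 : ℕ) : ℝ) ^ 2)⁻¹ ≤ 2 := by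
    rw [Nat.sum_antidiagonal_eq_sum_range_succ_mk]
    exact sum_range_inv_succ_sq_le_two (n + 1)
  have sum_snd : ∑ ij ∈ antidiagonal n, (((ij.2 + 1 : ℕ) : ℝ) ^ 2)⁻¹ ≤ 2 := by
    rwa [← Nat.sum_antidiagonal_swap]
  calc _ ≤ ∑ ij ∈ antidiagonal n, 50 * ((n - 2)! : ℝ) ^ s *
        ((((ij.1 + 1 : ℕ) : ℝ) ^ 2)⁻¹ + (((ij.2 + 1 : ℕ) : ℝ) ^ 2)⁻¹) := by
        refine sum_le_sum fun ij hij => ?_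
        rw [← mem_antidiagonal.1 hij]
        exact choose_mul_factorial_sub_two_rpow_le hs ij.1 ij.2
    _ ≤ 50 * ((n - 2)! : ℝ) ^ s * (2 + 2) := by
        rw [← mul_sum, sum_add_distrib]
        gcongr
    _ = 200 * ((n - 2)! : ℝ) ^ s := by ring

end FactorialSums

section GevreyBound

open Finset

/-- The anisotropic Gevrey weight `L₁ ^ a * L₂ ^ (b - 1) * ((a + b - 2)!) ^ s` against which
`∂_q^a ∂_p^b` is measured. Truncated subtraction implements the convention `m! = 1` for `m ≤ 0`,
and makes the power of `L₂` equal to `1` at `b = 0`. -/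
def gevreyWeight (s L₁ L₂ : ℝ) (a b : ℕ) : ℝ :=
  L₁ ^ a * L₂ ^ (b - 1) * ((a + b - 2)! : ℝ) ^ s

variable {s L₁ L₂ : ℝ}

lemma gevreyWeight_nonneg (hL₁ : 0 ≤ L₁) (hL₂ : 0 ≤ L₂) (a b : ℕ) :
    0 ≤ gevreyWeight s L₁ L₂ a b := by
  unfold gevreyWeight
  positivity

lemma one_le_gevreyWeight (hs : 0 ≤ s) (hL₁ : 1 ≤ L₁) (hL₂ : 1 ≤ L₂) (a b : ℕ) :
    1 ≤ gevreyWeight s L₁ L₂ a b := by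
  have hfact : (1 : ℝ) ≤ (a + b - 2)! := mod_cast Nat.factorial_pos _
  exact one_le_mul_of_one_le_of_one_le
    (one_le_mul_of_one_le_of_one_le (one_le_pow₀ hL₁) (one_le_pow₀ hL₂))
    (Real.one_le_rpow hfact hs)

lemma gevreyWeight_sub_eq_zpow {m n : ℕ} (hn : 1 ≤ n) (hnm : n ≤ m) :
    gevreyWeight s L₁ L₂ (m - n) n =
      L₁ ^ ((m : ℤ) - (n : ℤ)) * L₂ ^ ((n : ℤ) - 1) * ((m - 2)! : ℝ) ^ s := by
  rw [gevreyWeight, Nat.sub_add_cancel hnm, ← zpow_natCast, ← zpow_natCast,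
    Nat.cast_sub hnm, Nat.cast_sub hn, Nat.cast_one]

lemma gevreyWeight_mul_le (hL₁ : 0 ≤ L₁) (hL₂ : 1 ≤ L₂) (i j k l : ℕ) :
    gevreyWeight s L₁ L₂ i k * gevreyWeight s L₁ L₂ j l ≤
      L₁ ^ (i + j) * L₂ ^ (k + l - 1) *
        (((i + k - 2)! : ℝ) ^ s * ((j + l - 2)! : ℝ) ^ s) := by
  calc gevreyWeight s L₁ L₂ i k * gevreyWeight s L₁ L₂ j l
      = L₁ ^ (i + j) * L₂ ^ (k - 1 + (l - 1)) *
          (((i + k - 2)! : ℝ) ^ s * ((j + l - 2)! : ℝ) ^ s) := by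
        simp only [gevreyWeight, pow_add]
        ring
    _ ≤ _ := by
        gcongr
        lia

lemma sum_choose_mul_sum_choose_mul_gevreyWeight_le (hs : 1 ≤ s) (hL₁ : 0 ≤ L₁) (hL₂ : 1 ≤ L₂)
    (a b : ℕ) :
    ∑ ij ∈ antidiagonal a, (a.choose ij.1 : ℝ) * ∑ kl ∈ antidiagonal b, (b.choose kl.1 : ℝ) *
        (gevreyWeight s L₁ L₂ ij.1 kl.1 * gevreyWeight s L₁ L₂ ij.2 kl.2) ≤
      200 * gevreyWeight s L₁ L₂ a b := by
  let G (x y : ℕ) : ℝ := L₁ ^ a * L₂ ^ (b - 1) * (((x - 2)! : ℝ) ^ s * ((y - 2)! : ℝ) ^ s)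
  calc _ ≤ ∑ ij ∈ antidiagonal a, (a.choose ij.1 : ℝ) *
        ∑ kl ∈ antidiagonal b, (b.choose kl.1 : ℝ) * G (ij.1 + kl.1) (ij.2 + kl.2) := by
        gcongr with ij hij kl hkl
        simpa only [mem_antidiagonal.1 hij, mem_antidiagonal.1 hkl] using
          gevreyWeight_mul_le (s := s) hL₁ hL₂ ij.1 ij.2 kl.1 kl.2
    _ = ∑ xy ∈ antidiagonal (a + b), ((a + b).choose xy.1 : ℝ) * G xy.1 xy.2 :=
        sum_antidiagonal_choose_mul_sum_antidiagonal_choose_mul G a b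
    _ = L₁ ^ a * L₂ ^ (b - 1) * ∑ xy ∈ antidiagonal (a + b), ((a + b).choose xy.1 : ℝ) *
          (((xy.1 - 2)! : ℝ) ^ s * ((xy.2 - 2)! : ℝ) ^ s) := by
        simp only [G, mul_sum, mul_left_comm]
    _ ≤ L₁ ^ a * L₂ ^ (b - 1) * (200 * ((a + b - 2)! : ℝ) ^ s) := by
        gcongr
        exact sum_antidiagonal_choose_mul_factorial_sub_two_rpow_le hs (a + b)
    _ = 200 * gevreyWeight s L₁ L₂ a b := by
        rw [gevreyWeight]
        ring

/-- `f` is smooth on `S`, and on `S` its derivatives `∂_q^a ∂_p^b f` with `a ≤ A` and `b ≤ B` are at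
most `C` times the Gevrey weight. This is the class of functions stable under products. -/
structure GevreyBound (S : Set (ℝ × ℝ)) (s L₁ L₂ : ℝ) (A B : ℕ) (C : ℝ) (f : ℝ × ℝ → ℝ) :
    Prop where
  contDiffOn : ContDiffOn ℝ ∞ f S
  abs_mpw_le : ∀ a ≤ A, ∀ b ≤ B, ∀ z ∈ S, |mpw S a b f z| ≤ C * gevreyWeight s L₁ L₂ a b

lemma GevreyBound.mul {S : Set (ℝ × ℝ)} (hS : UniqueDiffOn ℝ S) (hs : 1 ≤ s) (hL₁ : 0 ≤ L₁)
    (hL₂ : 1 ≤ L₂) {A B : ℕ} {C D : ℝ} (hC : 0 ≤ C) (hD : 0 ≤ D) {f g : ℝ × ℝ → ℝ}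
    (hf : GevreyBound S s L₁ L₂ A B C f) (hg : GevreyBound S s L₁ L₂ A B D g) :
    GevreyBound S s L₁ L₂ A B (200 * (C * D)) fun z => f z * g z := by
  refine ⟨hf.contDiffOn.mul hg.contDiffOn, fun a ha b hb z hz => ?_⟩
  let W := gevreyWeight s L₁ L₂
  have term_le : ∀ ij ∈ antidiagonal a, ∀ kl ∈ antidiagonal b,
      |mpw S ij.1 kl.1 f z * mpw S ij.2 kl.2 g z| ≤ C * D * (W ij.1 kl.1 * W ij.2 kl.2) := by
    intro ij hij kl hkl
    have hfz := hf.abs_mpw_le ij.1 ((HasAntidiagonal.antidiagonal.fst_le hij).trans ha) kl.1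
      ((HasAntidiagonal.antidiagonal.fst_le hkl).trans hb) z hz
    have hgz := hg.abs_mpw_le ij.2 ((HasAntidiagonal.antidiagonal.snd_le hij).trans ha) kl.2
      ((HasAntidiagonal.antidiagonal.snd_le hkl).trans hb) z hz
    rw [abs_mul, mul_mul_mul_comm C]
    exact mul_le_mul hfz hgz (abs_nonneg _)
      (mul_nonneg hC (gevreyWeight_nonneg hL₁ (zero_le_one.trans hL₂) _ _))
  rw [mpw_mul hS hf.contDiffOn hg.contDiffOn a b hz]
  calc _ ≤ ∑ ij ∈ antidiagonal a, (a.choose ij.1 : ℝ) * ∑ kl ∈ antidiagonal b,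
        (b.choose kl.1 : ℝ) * |mpw S ij.1 kl.1 f z * mpw S ij.2 kl.2 g z| := by
        refine (abs_sum_le_sum_abs _ _).trans (sum_le_sum fun ij _ => ?_)
        rw [abs_mul, Nat.abs_cast]
        gcongr
        refine (abs_sum_le_sum_abs _ _).trans_eq (sum_congr rfl fun kl _ => ?_)
        rw [abs_mul, Nat.abs_cast]
    _ ≤ ∑ ij ∈ antidiagonal a, (a.choose ij.1 : ℝ) * ∑ kl ∈ antidiagonal b,
        (b.choose kl.1 : ℝ) * (C * D * (W ij.1 kl.1 * W ij.2 kl.2)) := by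
        gcongr with ij hij kl hkl
        exact term_le ij hij kl hkl
    _ = C * D * ∑ ij ∈ antidiagonal a, (a.choose ij.1 : ℝ) * ∑ kl ∈ antidiagonal b,
        (b.choose kl.1 : ℝ) * (W ij.1 kl.1 * W ij.2 kl.2) := by
        simp only [mul_sum, mul_left_comm]
    _ ≤ C * D * (200 * W a b) := by
        gcongr
        exact sum_choose_mul_sum_choose_mul_gevreyWeight_le hs hL₁ hL₂ a b
    _ = 200 * (C * D) * W a b := by ring

lemma GevreyBound.mul_mul {S : Set (ℝ × ℝ)} (hS : UniqueDiffOn ℝ S) (hs : 1 ≤ s) (hL₁ : 0 ≤ L₁)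
    (hL₂ : 1 ≤ L₂) {A B : ℕ} {C D E : ℝ} (hC : 0 ≤ C) (hD : 0 ≤ D) (hE : 0 ≤ E)
    {f g k : ℝ × ℝ → ℝ} (hf : GevreyBound S s L₁ L₂ A B C f) (hg : GevreyBound S s L₁ L₂ A B D g)
    (hk : GevreyBound S s L₁ L₂ A B E k) :
    GevreyBound S s L₁ L₂ A B (40000 * (C * D * E)) fun z => f z * g z * k z := by
  convert (hf.mul hS hs hL₁ hL₂ hC hD hg).mul hS hs hL₁ hL₂ (by positivity) hE hk using 1
  ring

end GevreyBound

section StripNorms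

open Finset

variable {p₀ : ℝ}

lemma convex_strip (p₀ : ℝ) : Convex ℝ (Strip p₀) :=
  (convex_Icc p₀ 0).linear_preimage (LinearMap.snd ℝ ℝ ℝ)

lemma interior_strip_nonempty (hp₀ : p₀ < 0) : (interior (Strip p₀)).Nonempty := by
  have hStrip : Strip p₀ = univ ×ˢ Icc p₀ 0 := by
    ext z
    simp [Strip]
  rw [hStrip, interior_prod_eq, interior_univ, interior_Icc]
  exact univ_nonempty.prod (nonempty_Ioo.2 hp₀)

lemma uniqueDiffOn_strip (hp₀ : p₀ < 0) : UniqueDiffOn ℝ (Strip p₀) :=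
  uniqueDiffOn_convex (convex_strip p₀) (interior_strip_nonempty hp₀)

lemma strip_subset_closure_interior (hp₀ : p₀ < 0) :
    Strip p₀ ⊆ closure (interior (Strip p₀)) := by
  rw [(convex_strip p₀).closure_interior_eq_closure_of_nonempty_interior
    (interior_strip_nonempty hp₀)]
  exact subset_closure

lemma abs_le_supS {f : ℝ × ℝ → ℝ} (hf : bddS p₀ f) {z : ℝ × ℝ} (hz : z ∈ Strip p₀) :
    |f z| ≤ supS p₀ f :=
  le_csSup hf (mem_image_of_mem _ hz)

lemma supS_nonneg (f : ℝ × ℝ → ℝ) : 0 ≤ supS p₀ f :=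
  Real.sSup_nonneg (forall_mem_image.2 fun _ _ => abs_nonneg _)

lemma supS_le (hp₀ : p₀ ≤ 0) {f : ℝ × ℝ → ℝ} {C : ℝ} (hf : ∀ z ∈ Strip p₀, |f z| ≤ C) :
    supS p₀ f ≤ C :=
  csSup_le (Set.Nonempty.image _ ⟨(0, 0), hp₀, le_rfl⟩) (forall_mem_image.2 hf)

lemma supS_pd_le_cknorm (f : ℝ × ℝ → ℝ) {k a b : ℕ} (hab : a + b ≤ k) :
    supS p₀ (pd p₀ a b f) ≤ cknorm p₀ k f := by
  calc supS p₀ (pd p₀ a b f) ≤ ∑ b ∈ range (k + 1 - a), supS p₀ (pd p₀ a b f) :=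
        single_le_sum (f := fun b => supS p₀ (pd p₀ a b f)) (fun _ _ => supS_nonneg _)
          (mem_range.2 (by lia))
    _ ≤ cknorm p₀ k f :=
        single_le_sum (f := fun a => ∑ b ∈ range (k + 1 - a), supS p₀ (pd p₀ a b f))
          (fun _ _ => sum_nonneg fun _ _ => supS_nonneg _) (mem_range.2 (by lia))

lemma supS_congr {f g : ℝ × ℝ → ℝ} (h : EqOn f g (Strip p₀)) : supS p₀ f = supS p₀ g :=
  congrArg sSup (image_congr fun z hz => by rw [h hz])

lemma abs_pd_add_le_cknorm_pd (hp₀ : p₀ < 0) {h : ℝ × ℝ → ℝ} (hh : ContDiffOn ℝ ∞ h (Strip p₀))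
    {k a b c d : ℕ} (hb : bddS p₀ (pd p₀ (a + c) (b + d) h)) (hab : a + b ≤ k)
    {z : ℝ × ℝ} (hz : z ∈ Strip p₀) :
    |pd p₀ (a + c) (b + d) h z| ≤ cknorm p₀ k (pd p₀ c d h) :=
  calc |pd p₀ (a + c) (b + d) h z| ≤ supS p₀ (pd p₀ (a + c) (b + d) h) := abs_le_supS hb hz
    _ = supS p₀ (pd p₀ a b (pd p₀ c d h)) := (supS_congr (mpw_mpw (uniqueDiffOn_strip hp₀)
        (strip_subset_closure_interior hp₀) hh a b c d)).symm
    _ ≤ cknorm p₀ k (pd p₀ c d h) := supS_pd_le_cknorm _ hab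

lemma GevreyBound.supS_pd_le {s L₁ L₂ C : ℝ} {A B : ℕ} {f : ℝ × ℝ → ℝ}
    (hf : GevreyBound (Strip p₀) s L₁ L₂ A B C f) (hp₀ : p₀ ≤ 0) :
    supS p₀ (pd p₀ A B f) ≤ C * gevreyWeight s L₁ L₂ A B :=
  supS_le hp₀ (hf.abs_mpw_le A le_rfl B le_rfl)

end StripNorms

section InductiveBounds

variable {p₀ s L₁ L₂ : ℝ} {m n : ℕ} {h : ℝ × ℝ → ℝ}

lemma IndBounds.cknorm_two_le (hI : IndBounds p₀ s L₁ L₂ m n h) {i j : ℕ} (hij : 2 ≤ i + j)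
    (hijm : i + j ≤ m) (hjn : j < n) :
    cknorm p₀ 2 (pd p₀ i j h) ≤ L₁ ^ ((i : ℤ) - 1) * L₂ ^ j * ((i + j - 2)! : ℝ) ^ s := by
  rcases hijm.lt_or_eq with hlt | rfl
  · exact hI.1 i j hij (by lia)
  · simpa using hI.2 j hjn

lemma IndBounds.cknorm_two_le_gevreyWeight (hI : IndBounds p₀ s L₁ L₂ m n h) (hs : 0 ≤ s)
    (hL₁ : 1 ≤ L₁) (hL₂ : 1 ≤ L₂) {i j a b : ℕ} (hij : 2 ≤ i + j) (hijm : i + j ≤ m)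
    (hjn : j < n) (hia : i ≤ a + 1) (hjb : j ≤ b - 1) (hijab : i + j ≤ a + b) :
    cknorm p₀ 2 (pd p₀ i j h) ≤ gevreyWeight s L₁ L₂ a b := by
  refine (hI.cknorm_two_le hij hijm hjn).trans ?_
  rw [gevreyWeight, ← zpow_natCast L₁]
  gcongr
  lia

/-- One `p`-derivative is always absorbed by the `C²` norm; when `b` and `c` are both positive, it
is traded for a `q`-derivative. -/
lemma exists_index_absorbed_by_two {a b c d : ℕ} (hab : 3 ≤ a + b) (hcd : c + d ≤ 2)
    (hd : d ≤ 1) :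
    ∃ i j, 2 ≤ i + j ∧ i + j ≤ a + b ∧ i ≤ a + 1 ∧ j ≤ b - 1 ∧
      ∃ k l, k + l ≤ 2 ∧ a + c = k + i ∧ b + d = l + j := by
  rcases Nat.eq_zero_or_pos b with rfl | hb
  · exact ⟨a, 0, by lia, by lia, by lia, by lia, c, d, by lia, by lia, by lia⟩
  rcases Nat.eq_zero_or_pos c with rfl | hc
  · exact ⟨a, b - 1, by lia, by lia, by lia, by lia, 0, d + 1, by lia, by lia, by lia⟩
  · exact ⟨a + 1, b - 1, by lia, by lia, by lia, by lia, c - 1, d + 1, by lia, by lia, by lia⟩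

lemma IndBounds.gevreyBound_pd (hI : IndBounds p₀ s L₁ L₂ m n h) (hp₀ : p₀ < 0) (hs : 0 ≤ s)
    (hL₁ : 1 ≤ L₁) (hL₂ : 1 ≤ L₂) (hn : 1 ≤ n) (hnm : n ≤ m)
    (hh : ContDiffOn ℝ ∞ h (Strip p₀)) (hb : ∀ a b, bddS p₀ (pd p₀ a b h)) {K : ℝ}
    (hK : cknorm p₀ 4 h ≤ K) {c d : ℕ} (hcd : c + d ≤ 2) (hd : d ≤ 1) :
    GevreyBound (Strip p₀) s L₁ L₂ (m - n) n (max K 1) (pd p₀ c d h) := by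
  have hS := uniqueDiffOn_strip hp₀
  refine ⟨contDiffOn_mpw hS hh c d, fun a ha b hbn z hz => ?_⟩
  rw [pd, mpw_mpw hS (strip_subset_closure_interior hp₀) hh a b c d hz]
  change |pd p₀ (a + c) (b + d) h z| ≤ _
  have hW := one_le_gevreyWeight hs hL₁ hL₂ a b
  by_cases hab : 3 ≤ a + b
  · obtain ⟨i, j, hij, hijab, hia, hjb, k, l, hkl, hac, hbd⟩ :=
      exists_index_absorbed_by_two hab hcd hd
    calc |pd p₀ (a + c) (b + d) h z| ≤ cknorm p₀ 2 (pd p₀ i j h) := by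
          rw [hac, hbd]
          exact abs_pd_add_le_cknorm_pd hp₀ hh (hb _ _) hkl hz
      _ ≤ gevreyWeight s L₁ L₂ a b :=
          hI.cknorm_two_le_gevreyWeight hs hL₁ hL₂ hij (by lia) (by lia) hia hjb hijab
      _ ≤ max K 1 * gevreyWeight s L₁ L₂ a b :=
          le_mul_of_one_le_left (zero_le_one.trans hW) (le_max_right K 1)
  · calc |pd p₀ (a + c) (b + d) h z| ≤ supS p₀ (pd p₀ (a + c) (b + d) h) :=
          abs_le_supS (hb _ _) hz
      _ ≤ cknorm p₀ 4 h := supS_pd_le_cknorm h (by lia)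
      _ ≤ max K 1 := hK.trans (le_max_left K 1)
      _ ≤ max K 1 * gevreyWeight s L₁ L₂ a b := le_mul_of_one_le_right (by positivity) hW

end InductiveBounds

theorem mixed_cubic_terms_bound_general {p₀ s K L₁ L₂ : ℝ} {m n : ℕ} {h : ℝ × ℝ → ℝ}
    (hp₀ : p₀ < 0) (hs : 1 ≤ s) (hn : 1 ≤ n) (hnm : n ≤ m) (hL₁ : 1 ≤ L₁) (hL₂ : 1 ≤ L₂)
    (hh : ContDiffOn ℝ ∞ h (Strip p₀)) (hb : ∀ a b : ℕ, bddS p₀ (pd p₀ a b h))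
    (hK : cknorm p₀ 4 h ≤ K) (hI : IndBounds p₀ s L₁ L₂ m n h) :
    2 * supS p₀ (pd p₀ (m - n) n
          (fun z => pd p₀ 0 1 h z * pd p₀ 1 0 h z * pd p₀ 1 1 h z))
      + supS p₀ (pd p₀ (m - n) n
          (fun z => (pd p₀ 0 1 h z) ^ 2 * pd p₀ 2 0 h z))
      ≤ 120000 * max K 1 ^ 3 * L₁ ^ ((m : ℤ) - (n : ℤ)) * L₂ ^ ((n : ℤ) - 1)
          * (Nat.factorial (m - 2) : ℝ) ^ s := by
  let M := max K 1
  let G := GevreyBound (Strip p₀) s L₁ L₂ (m - n) n M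
  have factor (c d : ℕ) (hcd : c + d ≤ 2) (hd : d ≤ 1) : G (pd p₀ c d h) :=
    hI.gevreyBound_pd hp₀ (zero_le_one.trans hs) hL₁ hL₂ hn hnm hh hb hK hcd hd
  have cubic {f₁ f₂ f₃ : ℝ × ℝ → ℝ} (h₁ : G f₁) (h₂ : G f₂) (h₃ : G f₃) :
      supS p₀ (pd p₀ (m - n) n fun z => f₁ z * f₂ z * f₃ z) ≤
        40000 * (M * M * M) * gevreyWeight s L₁ L₂ (m - n) n :=
    (h₁.mul_mul (uniqueDiffOn_strip hp₀) hs (zero_le_one.trans hL₁) hL₂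
      (by positivity) (by positivity) (by positivity) h₂ h₃).supS_pd_le hp₀.le
  have hp := factor 0 1 (by simp) (by simp)
  have hq := factor 1 0 (by simp) (by simp)
  have hqp := factor 1 1 (by simp) (by simp)
  have hqq := factor 2 0 (by simp) (by simp)
  simp only [pow_two]
  calc _ ≤ 2 * (40000 * (M * M * M) * gevreyWeight s L₁ L₂ (m - n) n) +
        40000 * (M * M * M) * gevreyWeight s L₁ L₂ (m - n) n :=
        add_le_add (mul_le_mul_of_nonneg_left (cubic hp hq hqp) zero_le_two) (cubic hp hp hqq)
    _ = _ := by
        rw [gevreyWeight_sub_eq_zpow hn hnm]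
        ring

/-- Lemma 4.2-type estimate: under the inductive Gevrey bounds, with `α = (m−n, n)`,
`2‖∂^α(h_p h_q h_{qp})‖₀ + ‖∂^α(h_p² h_{qq})‖₀ ≤ c₂ L₁^{α₁} L₂^{α₂−1} [(|α|−2)!]^s`,
with `c₂` independent of `m, n, L₁, L₂`. -/
theorem mixed_cubic_terms_bound (p₀ μ s K : ℝ) (hp₀ : p₀ < 0)
    (hμ : μ ∈ Set.Ioo (0 : ℝ) 1) (hs : 1 ≤ s) :
    ∃ c₂ : ℝ, 1 ≤ c₂ ∧ ∀ (m n : ℕ) (L₁ L₂ : ℝ) (h : ℝ × ℝ → ℝ),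
      3 ≤ m → 1 ≤ n → n ≤ m → 1 ≤ L₁ → L₁ ≤ L₂ →
      ContDiffOn ℝ (⊤ : ℕ∞) h (Strip p₀) →
      (∀ a b : ℕ, bddS p₀ (pd p₀ a b h)) →
      cknorm p₀ 4 h ≤ K → hnorm p₀ μ 2 (pd p₀ 1 0 h) ≤ K →
      IndBounds p₀ s L₁ L₂ m n h →
      2 * supS p₀ (pd p₀ (m - n) n
            (fun z => pd p₀ 0 1 h z * pd p₀ 1 0 h z * pd p₀ 1 1 h z))
        + supS p₀ (pd p₀ (m - n) n
            (fun z => (pd p₀ 0 1 h z) ^ 2 * pd p₀ 2 0 h z))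
        ≤ c₂ * L₁ ^ ((m : ℤ) - (n : ℤ)) * L₂ ^ ((n : ℤ) - 1)
            * (Nat.factorial (m - 2) : ℝ) ^ s := by
  exact ⟨120000 * max K 1 ^ 3, by linarith [one_le_pow₀ (le_max_right K 1) (n := 3)],
    fun m n L₁ L₂ h _ hn hnm hL₁ hL₁₂ hh hb hK _ hI => mixed_cubic_terms_bound_general
      hp₀ hs hn hnm hL₁ (hL₁.trans hL₁₂) hh hb hK hI⟩
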